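/- Let G be a finite abelian group with exp(G) ≥ 3, let k ∈ ℕ₀, and let n_1, n_2, n_3 be integers with 3 ≤ n_i ≤ |G| + 1 for i = 1, 2, 3. Then SD_k(G ⊕ C_{n_1} ⊕ C_{n_2} ⊕ C_{n_3}) ≥ SD_{k+3}(G) + (n_1 − 1) + (n_2 − 1) + (n_3 − 1). -/

import Mathlib

open Multiset

/-- A sequence (finite multiset) over `G` is zero-sumfree if every nonempty
subsequence has nonzero sum. -/
def IsZeroSumfree {G : Type*} [AddCommMonoid G] (S : Multiset G) : Prop :=
  ∀ T ≤ S, T ≠ 0 → T.sum ≠ 0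

/-- A minimal zero-sum sequence: a nonempty sequence with sum zero all of whose
nonempty proper subsequences have nonzero sum. -/
def IsMinimalZeroSum {G : Type*} [AddCommMonoid G] (S : Multiset G) : Prop :=
  S ≠ 0 ∧ S.sum = 0 ∧ ∀ T ≤ S, T ≠ 0 → T ≠ S → T.sum ≠ 0

/-- The cumulated multiplicity of level `ℓ` of a sequence:
`cm_ℓ(S) = Σ_{g ∈ G} max {0, v_g(S) − ℓ}`. -/
noncomputable def cmul {G : Type*} [AddCommMonoid G] (ℓ : ℕ) (S : Multiset G) : ℕ :=
  letI := Classical.decEq G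
  ∑ g ∈ S.toFinset, (S.count g - ℓ)

/-- `SD_{(k,ℓ)}(G)`: the maximum length of a minimal zero-sum sequence `S` over `G`
with `cm_ℓ(S) ≤ k`. -/
noncomputable def SDpair (G : Type*) [AddCommMonoid G] (k ℓ : ℕ) : ℕ :=
  sSup {m | ∃ S : Multiset G, IsMinimalZeroSum S ∧ cmul ℓ S ≤ k ∧ Multiset.card S = m}

/-- `SD_k(G)`: the `k`-th Strong Davenport constant. -/
noncomputable def SDk (G : Type*) [AddCommMonoid G] (k : ℕ) : ℕ := SDpair G k 1

/-- The Strong Davenport constant `SD(G) = SD_0(G)`. -/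
noncomputable def SD (G : Type*) [AddCommMonoid G] : ℕ := SDk G 0

/-- The Olson constant `Ol(G) = SD_1(G)`. -/
noncomputable def Ol (G : Type*) [AddCommMonoid G] : ℕ := SDk G 1

/-- `ol_k(G)`: the maximum length of a zero-sumfree sequence `S` over `G` with
`cm(S) ≤ k`. -/
noncomputable def olk (G : Type*) [AddCommMonoid G] (k : ℕ) : ℕ :=
  sSup {m | ∃ S : Multiset G, IsZeroSumfree S ∧ cmul 1 S ≤ k ∧ Multiset.card S = m}

/-- `Ol_k(G)`: the smallest integer `ℓ` such that every sequence `S` over `G` with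
`cm(S) ≤ k` and `|S| ≥ ℓ` has a nonempty zero-sum subsequence. -/
noncomputable def Olk (G : Type*) [AddCommMonoid G] (k : ℕ) : ℕ :=
  sInf {m | ∀ S : Multiset G, cmul 1 S ≤ k → m ≤ Multiset.card S →
    ∃ T, T ≤ S ∧ T ≠ 0 ∧ T.sum = 0}

/-- The Davenport constant `D(G)`: the maximum length of a minimal zero-sum
sequence over `G`. -/
noncomputable def DavenportD (G : Type*) [AddCommMonoid G] : ℕ :=
  sSup {m | ∃ S : Multiset G, IsMinimalZeroSum S ∧ Multiset.card S = m}

/-!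
Let `S` be a longest minimal zero-sum sequence over `G` with `cm(S) ≤ k + r`. Remove `r` terms
`g i`, taking repeated terms first, so that the remaining sequence `S₀` has `cm(S₀) ≤ k`, and
replace each `g i` by `n i` pairwise distinct terms: `n i - 2` elements `(b, e i)`, one element
`(x i, e i + e (σ i))` and one element `(y i, e i - e (σ i))`, where `e i` generates `C_{n i}` and
`σ` is a cyclic permutation of the indices.

Let a zero-sum subsequence use the terms with `e i + e (σ i)` for `i ∈ U` and those with
`e i - e (σ i)` for `i ∈ V`. Its `C_{n i}`-coordinates vanish, which forces `V = U` or `V = Uᶜ` when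
followed around the cycle, and all or none of the terms `(b, e i)` to occur for each `i`. If
`V = U`, the terms replacing `g i` are used entirely or not at all; they add up to `g i` in `G`,
so the minimality of `S` applies. If `V = Uᶜ`, the first components are chosen so that the new terms
contribute either `g o` or the sum of all other `g j`, for a fixed index `o`, which the minimality
of `S` excludes. These requirements prescribe, along the cycle, the differences of the sums of the
`b` belonging to consecutive indices; the differences add up to zero, and any sums can be realised
because for `exp(G) ≥ 3` every element of `G` is a sum of `m` distinct elements whenever
`0 < m < |G|`.
-/

/-! ### Subsequences -/

theorem exists_add_eq_of_le_add {α : Type*} {T A B : Multiset α} (h : T ≤ A + B) :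
    ∃ A' ≤ A, ∃ B' ≤ B, T = A' + B' := by
  classical
  refine ⟨T ∩ A, inter_le_right, T - A, tsub_le_iff_left.2 h, ?_⟩
  rw [add_comm, sub_add_inter]

theorem exists_sum_eq_of_le_sum {α ι : Type*} (s : Finset ι) {T : Multiset α}
    {B : ι → Multiset α} (h : T ≤ ∑ i ∈ s, B i) :
    ∃ A : ι → Multiset α, (∀ i, A i ≤ B i) ∧ T = ∑ i ∈ s, A i := by
  classical
  induction s using Finset.induction_on generalizing T with
  | empty => exact ⟨0, fun i => Multiset.zero_le _, by simpa using h⟩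
  | insert j s hj ih =>
    rw [Finset.sum_insert hj] at h
    obtain ⟨Tj, hTj, T', hT', rfl⟩ := exists_add_eq_of_le_add h
    obtain ⟨A, hA, rfl⟩ := ih hT'
    refine ⟨Function.update A j Tj, fun i => ?_, ?_⟩
    · obtain rfl | hij := eq_or_ne i j <;> simp [*]
    · rw [Finset.sum_insert hj, Function.update_self, Finset.sum_update_of_notMem hj]

theorem exists_map_eq_of_le_map {α β : Type*} {f : α → β} {T : Multiset β} {S : Multiset α}
    (h : T ≤ S.map f) : ∃ U ≤ S, T = U.map f := by
  induction S, T using Quotient.inductionOn₂ with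
  | h l t =>
    obtain ⟨t', ht, hsub⟩ : List.Subperm t (l.map f) := h
    obtain ⟨l', hl', rfl⟩ := List.sublist_map_iff.1 hsub
    exact ⟨l', hl'.subperm, (Quotient.sound ht).symm⟩

theorem exists_finset_map_eq_of_le_map {α β : Type*} {f : α → β} {T : Multiset β} {s : Finset α}
    (h : T ≤ s.val.map f) : ∃ u ⊆ s, T = u.val.map f := by
  obtain ⟨U, hU, rfl⟩ := exists_map_eq_of_le_map h
  exact ⟨⟨U, nodup_of_le hU s.nodup⟩, Finset.val_le_iff.1 hU, rfl⟩

theorem exists_fin_map_eq_of_card_eq {α : Type*} {S : Multiset α} {r : ℕ} (h : card S = r) :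
    ∃ g : Fin r → α, S = Finset.univ.val.map g := by
  subst h
  induction S using Quotient.inductionOn with
  | h l =>
    have hl : (l : Multiset α) = Finset.univ.val.map l.get := by
      rw [Fin.univ_val_map, List.ofFn_get]
    exact ⟨l.get, hl⟩

/-! ### Minimal zero-sum sequences -/

section MinimalZeroSum

variable {G K : Type*}

theorem isMinimalZeroSum_iff [AddCommMonoid G] {S : Multiset G} :
    IsMinimalZeroSum S ↔ S ≠ 0 ∧ S.sum = 0 ∧ ∀ T ≤ S, T.sum = 0 → T = 0 ∨ T = S := by
  simp only [IsMinimalZeroSum, ne_eq]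
  grind

theorem isMinimalZeroSum_singleton_zero [AddCommMonoid G] :
    IsMinimalZeroSum ({0} : Multiset G) :=
  isMinimalZeroSum_iff.2 ⟨by simp, by simp, fun _ hT _ => le_singleton.1 hT⟩

theorem IsMinimalZeroSum.map_of_injective [AddCommMonoid G] [AddCommMonoid K] {S : Multiset G}
    (hS : IsMinimalZeroSum S) (f : G →+ K) (hf : Function.Injective f) :
    IsMinimalZeroSum (S.map f) := by
  obtain ⟨hne, hsum, hmin⟩ := isMinimalZeroSum_iff.1 hS
  refine isMinimalZeroSum_iff.2 ⟨by simpa, by rw [← map_multiset_sum, hsum, _root_.map_zero], ?_⟩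
  intro T hT hTsum
  obtain ⟨U, hU, rfl⟩ := exists_map_eq_of_le_map hT
  rw [← map_multiset_sum, map_eq_zero_iff f hf] at hTsum
  obtain rfl | rfl := hmin U hU hTsum <;> simp

theorem isMinimalZeroSum_cons_replicate [AddCommGroup G] {g : G} {m : ℕ}
    (hm : m < addOrderOf g) : IsMinimalZeroSum (-(m • g) ::ₘ replicate m g) := by
  have nsmul_inj {j : ℕ} (hj : j ≤ m) {l : ℕ} (hl : l ≤ m) (h : j • g = l • g) : j = l :=
    nsmul_injOn_Iio_addOrderOf (hj.trans_lt hm) (hl.trans_lt hm) h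
  refine isMinimalZeroSum_iff.2 ⟨cons_ne_zero, by simp, fun T hT hTsum => ?_⟩
  by_cases hmem : -(m • g) ∈ T
  · obtain ⟨T', rfl⟩ := exists_cons_of_mem hmem
    obtain ⟨j, hj, rfl⟩ := le_replicate_iff.1 ((cons_le_cons_iff _).1 hT)
    have hjm : j • g = m • g := by simpa [neg_add_eq_zero, eq_comm] using hTsum
    exact .inr (by rw [nsmul_inj hj le_rfl hjm])
  · obtain ⟨j, hj, rfl⟩ := le_replicate_iff.1 ((le_cons_of_notMem hmem).1 hT)
    have hj0 : j • g = 0 • g := by simpa using hTsum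
    exact .inl (by rw [nsmul_inj hj (Nat.zero_le m) hj0, replicate_zero])

theorem IsMinimalZeroSum.eq_empty_or_eq_univ_of_sum_add_eq_zero [AddCommMonoid G]
    {ι : Type*} [Fintype ι] {S₀ : Multiset G} {g : ι → G}
    (hS : IsMinimalZeroSum (S₀ + Finset.univ.val.map g)) {R : Multiset G} (hR : R ≤ S₀)
    {U : Finset ι} (h : R.sum + ∑ i ∈ U, g i = 0) :
    R = 0 ∧ U = ∅ ∨ R = S₀ ∧ U = Finset.univ := by
  have hU : U.val.map g ≤ Finset.univ.val.map g :=
    map_le_map (Finset.val_le_iff.2 U.subset_univ)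
  obtain h0 | hfull := (isMinimalZeroSum_iff.1 hS).2.2 (R + U.val.map g) (add_le_add hR hU)
    (by rw [sum_add]; exact h)
  · left
    simpa using h0
  · right
    have hcard := congrArg card hfull
    have hRcard := card_le_card hR
    have hUcard := U.card_le_univ
    simp only [card_add, card_map, Finset.card_val, Finset.card_univ] at hcard
    exact ⟨eq_of_le_of_card_le hR (by omega), (Finset.card_eq_iff_eq_univ U).1 (by omega)⟩

end MinimalZeroSum

/-! ### Cumulated multiplicity and the constants `SD_k` -/

section CumulatedMultiplicity

variable {G K : Type*} [AddCommMonoid G] [AddCommMonoid K]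

theorem cmul_one_add_card_toFinset [DecidableEq G] (S : Multiset G) :
    cmul 1 S + S.toFinset.card = card S := by
  have count_pred_add_one : ∀ g ∈ S.toFinset, (S.count g - 1) + 1 = S.count g := fun g hg =>
    Nat.sub_add_cancel (count_pos.2 (mem_toFinset.1 hg))
  rw [← toFinset_sum_count_eq S, ← Finset.sum_congr rfl count_pred_add_one,
    Finset.sum_add_distrib, ← Finset.card_eq_sum_ones, cmul]
  congr!

theorem cmul_one_lt_card {S : Multiset G} (hS : S ≠ 0) : cmul 1 S < card S := by
  classical
  have hpos := Finset.card_pos.2 (toFinset_nonempty.2 hS)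
  have hcm := cmul_one_add_card_toFinset S
  omega

theorem cmul_one_map_of_injective {f : G → K} (hf : Function.Injective f) (S : Multiset G) :
    cmul 1 (S.map f) = cmul 1 S := by
  classical
  have hS := cmul_one_add_card_toFinset S
  have hmap := cmul_one_add_card_toFinset (S.map f)
  rw [toFinset_map, Finset.card_image_of_injective _ hf, card_map] at hmap
  omega

theorem cmul_one_add_of_nodup_of_disjoint {S W : Multiset G} (hW : W.Nodup)
    (hdisj : Disjoint S W) : cmul 1 (S + W) = cmul 1 S := by
  classical
  have hS := cmul_one_add_card_toFinset S
  have hadd := cmul_one_add_card_toFinset (S + W)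
  rw [toFinset_add, Finset.card_union_of_disjoint (disjoint_toFinset.2 hdisj),
    toFinset_card_of_nodup hW, card_add] at hadd
  omega

theorem exists_cons_cmul_one_le {S : Multiset G} (hS : S ≠ 0) :
    ∃ g S', S = g ::ₘ S' ∧ cmul 1 S' ≤ cmul 1 S - 1 := by
  classical
  by_cases hnodup : S.Nodup
  · obtain ⟨g, hg⟩ := exists_mem_of_ne_zero hS
    obtain ⟨S', rfl⟩ := exists_cons_of_mem hg
    have hS' := cmul_one_add_card_toFinset S'
    rw [toFinset_card_of_nodup (nodup_cons.1 hnodup).2] at hS'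
    exact ⟨g, S', rfl, by omega⟩
  · obtain ⟨g, t, rfl⟩ : ∃ g t, S = g ::ₘ g ::ₘ t := by
      simpa [nodup_iff_ne_cons_cons] using hnodup
    have hS := cmul_one_add_card_toFinset (g ::ₘ g ::ₘ t)
    have hS' := cmul_one_add_card_toFinset (g ::ₘ t)
    simp only [toFinset_cons, Finset.insert_idem, card_cons] at hS hS'
    exact ⟨g, g ::ₘ t, rfl, by omega⟩

theorem exists_add_map_cmul_one_le {S : Multiset G} {r : ℕ} (hr : r ≤ card S) :
    ∃ (S₀ : Multiset G) (g : Fin r → G),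
      S = S₀ + Finset.univ.val.map g ∧ cmul 1 S₀ ≤ cmul 1 S - r := by
  suffices ∃ S₀ M, S = S₀ + M ∧ card M = r ∧ cmul 1 S₀ ≤ cmul 1 S - r by
    obtain ⟨S₀, M, rfl, hM, hcm⟩ := this
    obtain ⟨g, rfl⟩ := exists_fin_map_eq_of_card_eq hM
    exact ⟨S₀, g, rfl, hcm⟩
  induction r with
  | zero => exact ⟨S, 0, by simp⟩
  | succ r ih =>
    obtain ⟨S₁, M, rfl, hM, hcm⟩ := ih (by omega)
    have hS₁ : S₁ ≠ 0 := by
      rintro rfl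
      simp only [zero_add] at hr
      omega
    obtain ⟨g, S₀, rfl, hcm₀⟩ := exists_cons_cmul_one_le hS₁
    exact ⟨S₀, g ::ₘ M, by simp, by simp [hM], by omega⟩

theorem bddAbove_card_isMinimalZeroSum (G : Type*) [AddCommMonoid G] [Finite G] (k : ℕ) :
    BddAbove {m | ∃ S : Multiset G, IsMinimalZeroSum S ∧ cmul 1 S ≤ k ∧ card S = m} := by
  classical
  have := Fintype.ofFinite G
  refine ⟨k + Fintype.card G, ?_⟩
  rintro _ ⟨S, -, hk, rfl⟩
  have hS := cmul_one_add_card_toFinset S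
  have hcard := S.toFinset.card_le_univ
  omega

theorem IsMinimalZeroSum.card_le_SDk [Finite G] {S : Multiset G} {k : ℕ}
    (hS : IsMinimalZeroSum S) (hk : cmul 1 S ≤ k) : card S ≤ SDk G k :=
  le_csSup (bddAbove_card_isMinimalZeroSum G k) ⟨S, hS, hk, rfl⟩

theorem exists_isMinimalZeroSum_card_eq_SDk (G : Type*) [AddCommMonoid G] [Finite G] (k : ℕ) :
    ∃ S : Multiset G, IsMinimalZeroSum S ∧ cmul 1 S ≤ k ∧ card S = SDk G k := by
  have hcm : cmul 1 ({0} : Multiset G) < 1 := cmul_one_lt_card (singleton_ne_zero 0)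
  have hne : {m | ∃ S : Multiset G, IsMinimalZeroSum S ∧ cmul 1 S ≤ k ∧ card S = m}.Nonempty :=
    ⟨1, {0}, isMinimalZeroSum_singleton_zero, by omega, card_singleton 0⟩
  exact Nat.sSup_mem hne (bddAbove_card_isMinimalZeroSum G k)

theorem SDk_le_SDk_of_injective [Finite K] {f : G →+ K} (hf : Function.Injective f) (k : ℕ) :
    SDk G k ≤ SDk K k := by
  have := Finite.of_injective f hf
  obtain ⟨S, hS, hk, hcard⟩ := exists_isMinimalZeroSum_card_eq_SDk G k
  rw [← hcard, ← card_map f S]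
  exact (hS.map_of_injective f hf).card_le_SDk (by rwa [cmul_one_map_of_injective hf])

end CumulatedMultiplicity

theorem le_SDk_of_le_addOrderOf {G : Type*} [AddCommGroup G] [Finite G] {g : G} {r k : ℕ}
    (hg : r ≤ addOrderOf g) (hk : r ≤ k + 1) : r ≤ SDk G k := by
  obtain _ | m := r
  · exact Nat.zero_le _
  · have hcm := cmul_one_lt_card (cons_ne_zero (a := -(m • g)) (m := replicate m g))
    have hcard : card (-(m • g) ::ₘ replicate m g) = m + 1 := by simp
    rw [← hcard]
    exact (isMinimalZeroSum_cons_replicate hg).card_le_SDk (by omega)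

theorem le_SDk_of_le_exponent {G : Type*} [AddCommGroup G] [Finite G] {r k : ℕ}
    (hr : r ≤ AddMonoid.exponent G) (hk : r ≤ k + 1) : r ≤ SDk G k := by
  obtain ⟨g, hg⟩ := AddMonoid.exists_addOrderOf_eq_exponent (G := G) .of_finite
  exact le_SDk_of_le_addOrderOf (hr.trans_eq hg.symm) hk

/-! ### Sums of subsets of prescribed cardinality -/

section SubsetSums

variable {G : Type*} [AddCommGroup G]

theorem exists_card_eq_sum_eq_of_exchange {A C D : Finset G} (hC : C ⊆ A) (hD : Disjoint A D)
    (hcard : C.card = D.card) :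
    ∃ B : Finset G, B.card = A.card ∧ ∑ x ∈ B, x = ∑ x ∈ A, x - ∑ x ∈ C, x + ∑ x ∈ D, x := by
  classical
  have hdisj : Disjoint (A \ C) D := hD.mono_left Finset.sdiff_subset
  refine ⟨A \ C ∪ D, ?_, ?_⟩
  · rw [Finset.card_union_of_disjoint hdisj, ← hcard, Finset.card_sdiff_add_card_eq_card hC]
  · rw [Finset.sum_union hdisj, Finset.sum_sdiff_eq_sub hC]

theorem exists_mem_zmultiples_ne_ne {d : G} (hd : 2 • d ≠ 0) (a b : G) :
    ∃ h ∈ AddSubgroup.zmultiples d, h ≠ a ∧ h ≠ b := by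
  have hd0 : d ≠ 0 := by
    rintro rfl
    exact hd (smul_zero 2)
  have hneg : d ≠ -d := fun h => hd (by rw [two_nsmul, ← eq_neg_iff_add_eq_zero, ← h])
  have hmem := AddSubgroup.mem_zmultiples d
  by_contra! hcon
  have h0 := hcon 0 (zero_mem _)
  have h1 := hcon d hmem
  have h2 := hcon (-d) (neg_mem hmem)
  grind [neg_ne_zero]

open scoped Pointwise in
-- One term leaves `A` along `q = c - a` and another one along `-q`; periodicity leaves enough
-- freedom to correct the sum by `d` and to keep the terms distinct.
theorem exists_card_eq_sum_eq_add_of_mem_stabilizer [DecidableEq G] {A : Finset G} {a c d : G}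
    (ha : a ∈ A) (hc : c ∉ A) (hd : 2 • d ≠ 0) (hper : d ∈ AddAction.stabilizer G A) :
    ∃ B : Finset G, B.card = A.card ∧ ∑ x ∈ B, x = ∑ x ∈ A, x + d := by
  have hq : a - c ∉ AddAction.stabilizer G A := fun h =>
    hc (by simpa using (AddAction.mem_stabilizer_finset.1 (sub_mem_comm_iff.1 h) a).2 ha)
  obtain ⟨e, he, hqe⟩ : ∃ e ∈ A, a - c + e ∉ A := by
    simpa only [AddAction.mem_stabilizer_finset', vadd_eq_add, not_forall, exists_prop] using hq
  obtain ⟨h, hmem, hae, hce⟩ :=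
    exists_mem_zmultiples_ne_ne hd (a - e) (d + c - (a - c + e))
  have add_mem_iff {t : G} (ht : t ∈ AddAction.stabilizer G A) (x : G) : t + x ∈ A ↔ x ∈ A :=
    AddAction.mem_stabilizer_finset.1 ht x
  have hh : h ∈ AddAction.stabilizer G A := AddSubgroup.zmultiples_le.2 hper hmem
  have hout : a ≠ h + e := fun heq => hae (eq_sub_iff_add_eq.2 heq.symm)
  have hin : d + c ≠ h + (a - c + e) := fun heq => hce (eq_sub_iff_add_eq.2 heq.symm)
  obtain ⟨B, hcard, hsum⟩ := exists_card_eq_sum_eq_of_exchange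
    (A := A) (C := {a, h + e}) (D := {d + c, h + (a - c + e)})
    (by simp [Finset.insert_subset_iff, ha, add_mem_iff hh, he])
    (by simp [add_mem_iff hper, add_mem_iff hh, hc, hqe])
    (by rw [Finset.card_pair hout, Finset.card_pair hin])
  refine ⟨B, hcard, ?_⟩
  rw [hsum, Finset.sum_pair hout, Finset.sum_pair hin]
  abel

open scoped Pointwise in
theorem exists_card_eq_sum_eq_add {A : Finset G} {a c d : G} (ha : a ∈ A) (hc : c ∉ A)
    (hd : 2 • d ≠ 0) : ∃ B : Finset G, B.card = A.card ∧ ∑ x ∈ B, x = ∑ x ∈ A, x + d := by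
  classical
  by_cases hper : d ∈ AddAction.stabilizer G A
  · exact exists_card_eq_sum_eq_add_of_mem_stabilizer ha hc hd hper
  · obtain ⟨b, hb, hdb⟩ : ∃ b ∈ A, d + b ∉ A := by
      simpa only [AddAction.mem_stabilizer_finset', vadd_eq_add, not_forall, exists_prop] using hper
    obtain ⟨B, hcard, hsum⟩ := exists_card_eq_sum_eq_of_exchange (C := {b}) (D := {d + b})
      (by simpa) (by simpa) (by simp)
    refine ⟨B, hcard, ?_⟩
    rw [hsum, Finset.sum_singleton, Finset.sum_singleton]
    abel

theorem exists_finset_card_eq_sum_eq [Fintype G] {g : G} (hg : 2 • g ≠ 0) {m : ℕ} (hm : m ≠ 0)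
    (hmG : m < Fintype.card G) (t : G) : ∃ B : Finset G, B.card = m ∧ ∑ x ∈ B, x = t := by
  have step {s d : G} (hd : 2 • d ≠ 0) :
      (∃ B : Finset G, B.card = m ∧ ∑ x ∈ B, x = s) →
        ∃ B : Finset G, B.card = m ∧ ∑ x ∈ B, x = s + d := by
    rintro ⟨A, rfl, rfl⟩
    obtain ⟨a, ha⟩ := Finset.card_ne_zero.1 hm
    obtain ⟨c, -, hc⟩ := Finset.exists_mem_notMem_of_card_lt_card hmG
    exact exists_card_eq_sum_eq_add ha hc hd
  obtain ⟨A, -, hA⟩ := Finset.exists_subset_card_eq (s := (Finset.univ : Finset G)) hmG.le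
  have start : ∃ B : Finset G, B.card = m ∧ ∑ x ∈ B, x = ∑ x ∈ A, x := ⟨A, hA, rfl⟩
  set d := t - ∑ x ∈ A, x with d_def
  by_cases hd : 2 • d = 0
  · have hdg : 2 • (d - g) ≠ 0 := by rwa [smul_sub, hd, zero_sub, neg_ne_zero]
    simpa [d_def] using step hdg (step hg start)
  · simpa [d_def] using step hd start

end SubsetSums

/-! ### Cyclic permutations -/

theorem forall_of_isCycleOn_univ {ι : Type*} [Finite ι] {σ : Equiv.Perm ι}
    (hσ : σ.IsCycleOn Set.univ) {P : ι → Prop} (hP : ∀ i, P (σ i) → P i) {j : ι} (hj : P j)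
    (i : ι) : P i := by
  obtain ⟨m, hm⟩ := (hσ.2 (Set.mem_univ i) (Set.mem_univ j)).exists_nat_pow_eq
  induction m generalizing i with
  | zero => simpa [← hm] using hj
  | succ m ih => exact hP i (ih (σ i) (by rwa [← Equiv.Perm.mul_apply, ← pow_succ]))

theorem apply_apply_ne_of_isCycleOn_univ {ι : Type*} [Fintype ι] {σ : Equiv.Perm ι}
    (hσ : σ.IsCycleOn Set.univ) (hι : 3 ≤ Fintype.card ι) (i : ι) : σ (σ i) ≠ i := by
  intro h
  rw [← Finset.coe_univ] at hσ
  have hdvd : Fintype.card ι ∣ 2 := (hσ.pow_apply_eq (Finset.mem_univ i)).1 h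
  have hle := Nat.le_of_dvd two_pos hdvd
  omega

theorem isCycleOn_finRotate_univ {r : ℕ} (hr : 2 ≤ r) : (finRotate r).IsCycleOn Set.univ := by
  have hsupp : {i | finRotate r i ≠ i} = Set.univ := by
    rw [← Equiv.Perm.coe_support_eq_set_support, support_finRotate_of_le hr, Finset.coe_univ]
  simpa only [hsupp] using (isCycle_finRotate_of_le hr).isCycleOn

theorem exists_sub_finRotate_eq {G : Type*} [AddCommGroup G] {r : ℕ} {f : Fin r → G}
    (hf : ∑ i, f i = 0) : ∃ β : Fin r → G, ∀ i, β (finRotate r i) - β i = f i := by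
  obtain _ | r := r
  · exact ⟨f, fun i => i.elim0⟩
  have partialSum_last : Fin.partialSum f (Fin.last (r + 1)) = 0 := by
    rw [Fin.partialSum, Fin.val_last, List.take_of_length_le (by simp), List.sum_ofFn, hf]
  have partialSum_finRotate (i : Fin (r + 1)) :
      Fin.partialSum f (finRotate (r + 1) i).castSucc = Fin.partialSum f i.succ := by
    induction i using Fin.lastCases with
    | last =>
      rw [finRotate_last, Fin.castSucc_zero, Fin.partialSum_zero, Fin.succ_last, partialSum_last]
    | cast i => rw [finRotate_apply, Fin.coeSucc_eq_succ, Fin.succ_castSucc]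
  refine ⟨fun i => Fin.partialSum f i.castSucc, fun i => ?_⟩
  simp only [partialSum_finRotate, Fin.partialSum_succ, add_sub_cancel_left]

/-! ### The extended sequence -/

theorem sum_map_prodMk {G H : Type*} [AddCommMonoid G] [AddCommMonoid H] (A : Multiset G) (h : H) :
    (A.map fun b => (b, h)).sum = (A.sum, card A • h) := by
  induction A using Multiset.induction_on with
  | empty => simp [Prod.mk_zero_zero]
  | cons a A ih => simp [ih, succ_nsmul, add_comm]

theorem pi_single_one_apply {ι : Type*} [DecidableEq ι] {R : ι → Type*}
    [∀ i, AddMonoidWithOne (R i)] (i j : ι) :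
    (Pi.single i 1 : ∀ i, R i) j = if j = i then 1 else 0 := by
  split_ifs with h
  · subst h
    exact Pi.single_eq_same j 1
  · exact Pi.single_eq_of_ne h 1

section PiSingle

variable {ι : Type*} [DecidableEq ι] {R : ι → Type*} [∀ i, Ring (R i)] {σ : Equiv.Perm ι}

theorem pi_single_one_injective [∀ i, Nontrivial (R i)] :
    Function.Injective fun i => (Pi.single i 1 : ∀ i, R i) := by
  intro i j h
  by_contra hij
  simpa [pi_single_one_apply, hij] using congrFun h i

theorem pi_single_add_single_injective [∀ i, Nontrivial (R i)] (hσ : ∀ i, i ≠ σ i)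
    (hσσ : ∀ i, σ (σ i) ≠ i) :
    Function.Injective fun i => (Pi.single i 1 + Pi.single (σ i) 1 : ∀ i, R i) := by
  have eq_or_eq {i j : ι}
      (h : (Pi.single i 1 + Pi.single (σ i) 1 : ∀ i, R i) = Pi.single j 1 + Pi.single (σ j) 1) :
      i = j ∨ i = σ j := by
    by_contra! hne
    simpa [pi_single_one_apply, hσ, hne] using congrFun h i
  intro i j h
  rcases eq_or_eq h with hij | hi
  · exact hij
  rcases eq_or_eq h.symm with hji | hj
  · exact hji.symm
  · exact absurd (by rw [← hi, ← hj]) (hσσ j)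

theorem pi_single_one_ne_single_add_single [∀ i, Nontrivial (R i)] (hσ : ∀ i, i ≠ σ i) (i j : ι) :
    (Pi.single i 1 : ∀ i, R i) ≠ Pi.single j 1 + Pi.single (σ j) 1 := by
  intro h
  by_cases hij : j = i
  · simpa [pi_single_one_apply, hij, (hσ i).symm] using congrFun h (σ j)
  · simpa [pi_single_one_apply, hσ, hij] using congrFun h j

theorem pi_single_sub_single_injective (hσ : ∀ i, i ≠ σ i) (hR : ∀ i, (1 : R i) ≠ -1) :
    Function.Injective fun i => (Pi.single i 1 - Pi.single (σ i) 1 : ∀ i, R i) := by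
  have (i : ι) : Nontrivial (R i) := nontrivial_of_ne _ _ (hR i)
  intro i j h
  by_contra hij
  have hi := congrFun h i
  by_cases hiσ : i = σ j <;> simp [pi_single_one_apply, hσ, hij, hiσ, hR] at hi

theorem pi_single_one_ne_single_sub_single (hσ : ∀ i, i ≠ σ i) (hR : ∀ i, (1 : R i) ≠ -1)
    (i j : ι) : (Pi.single i 1 : ∀ i, R i) ≠ Pi.single j 1 - Pi.single (σ j) 1 := by
  have (i : ι) : Nontrivial (R i) := nontrivial_of_ne _ _ (hR i)
  intro h
  have hσj := congrFun h (σ j)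
  obtain rfl | hij := eq_or_ne (σ j) i
  · simp [(hσ j).symm, hR] at hσj
  · simp [(hσ j).symm, hij] at hσj

theorem pi_single_add_single_ne_single_sub_single (hσ : ∀ i, i ≠ σ i)
    (hR : ∀ i, (1 : R i) ≠ -1) (i j : ι) :
    (Pi.single i 1 + Pi.single (σ i) 1 : ∀ i, R i) ≠ Pi.single j 1 - Pi.single (σ j) 1 := by
  have (i : ι) : Nontrivial (R i) := nontrivial_of_ne _ _ (hR i)
  intro h
  have hσj := congrFun h (σ j)
  obtain rfl | hij := eq_or_ne j i
  · simp [(hσ j).symm, hR] at hσj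
  obtain rfl | hi := eq_or_ne (σ j) i
  · simp [(hσ j).symm, hσ, hR] at hσj
  · simp [(hσ j).symm, hij, hi] at hσj

end PiSingle

section CycleSequence

variable {G ι : Type*} [Fintype ι] [DecidableEq ι]

/-- The terms of `cycleSequence` with nonzero second component. With `e i` the generator of
`ZMod (n i)`, they are `(b, e i)` for `b ∈ A i`, `(x i, e i + e (σ i))` for `i ∈ U` and
`(y i, e i - e (σ i))` for `i ∈ V`. -/
def crossTerms (n : ι → ℕ) (σ : Equiv.Perm ι) (x y : ι → G) (A : ι → Multiset G)
    (U V : Finset ι) : Multiset (G × ∀ i, ZMod (n i)) :=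
  ∑ i, (A i).map (fun b => (b, Pi.single i 1)) +
    U.val.map (fun i => (x i, Pi.single i 1 + Pi.single (σ i) 1)) +
    V.val.map (fun i => (y i, Pi.single i 1 - Pi.single (σ i) 1))

/-- The sequence over `G ⊕ ⨁ ZMod (n i)` that enlarges the sequence `R` over `G` by `crossTerms`.
The parameters `U` and `V` are there because every subsequence of one with `U = V = univ` is again
of this form, by `exists_eq_cycleSequence_of_le`. -/
def cycleSequence (n : ι → ℕ) (σ : Equiv.Perm ι) (x y : ι → G) (R : Multiset G)
    (A : ι → Multiset G) (U V : Finset ι) : Multiset (G × ∀ i, ZMod (n i)) :=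
  R.map (fun b => (b, 0)) + crossTerms n σ x y A U V

variable {n : ι → ℕ} {σ : Equiv.Perm ι} {x y : ι → G} {R S₀ : Multiset G} {A B : ι → Multiset G}
  {U V : Finset ι}

theorem card_cycleSequence :
    card (cycleSequence n σ x y R A U V) =
      card R + (∑ i, card (A i) + U.card + V.card) := by
  simp [cycleSequence, crossTerms]

theorem exists_eq_cycleSequence_of_le {T : Multiset (G × ∀ i, ZMod (n i))}
    (hT : T ≤ cycleSequence n σ x y S₀ B Finset.univ Finset.univ) :
    ∃ R ≤ S₀, ∃ A : ι → Multiset G, (∀ i, A i ≤ B i) ∧ ∃ U V,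
      T = cycleSequence n σ x y R A U V := by
  obtain ⟨_, hR, W, hW, rfl⟩ := exists_add_eq_of_le_add hT
  obtain ⟨W', hW', _, hV, rfl⟩ := exists_add_eq_of_le_add hW
  obtain ⟨_, hA, _, hU, rfl⟩ := exists_add_eq_of_le_add hW'
  obtain ⟨R, hRS, rfl⟩ := exists_map_eq_of_le_map hR
  obtain ⟨U, -, rfl⟩ := exists_finset_map_eq_of_le_map hU
  obtain ⟨V, -, rfl⟩ := exists_finset_map_eq_of_le_map hV
  obtain ⟨A', hA', rfl⟩ := exists_sum_eq_of_le_sum _ hA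
  choose A hAB hAA' using fun i => exists_map_eq_of_le_map (hA' i)
  exact ⟨R, hRS, A, hAB, U, V, by simp only [cycleSequence, crossTerms, hAA']⟩

theorem nodup_crossTerms (hn : ∀ i, 3 ≤ n i) (hσ : ∀ i, i ≠ σ i) (hσσ : ∀ i, σ (σ i) ≠ i)
    (hB : ∀ i, (B i).Nodup) (U V : Finset ι) : (crossTerms n σ x y B U V).Nodup := by
  have (i : ι) : Fact (2 < n i) := ⟨hn i⟩
  have (i : ι) : Fact (1 < n i) := ⟨Nat.lt_of_succ_lt (hn i)⟩
  have hR (i : ι) : (1 : ZMod (n i)) ≠ -1 := (ZMod.neg_one_ne_one).symm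
  have hplain : (∑ i, (B i).map fun b => (b, (Pi.single i 1 : ∀ i, ZMod (n i)))).Nodup := by
    refine nodup_bind.2 ⟨fun i _ => (hB i).map (Prod.mk_left_injective _), ?_⟩
    refine Finset.univ.nodup.pairwise fun i _ j _ hij => ?_
    simpa [Function.onFun, disjoint_map_map] using
      fun _ _ _ _ _ h => hij (pi_single_one_injective h)
  have hadd : (U.val.map fun i =>
      (x i, (Pi.single i 1 + Pi.single (σ i) 1 : ∀ i, ZMod (n i)))).Nodup :=
    U.nodup.map fun i j h => pi_single_add_single_injective hσ hσσ (congrArg Prod.snd h)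
  have hsub : (V.val.map fun i =>
      (y i, (Pi.single i 1 - Pi.single (σ i) 1 : ∀ i, ZMod (n i)))).Nodup :=
    V.nodup.map fun i j h => pi_single_sub_single_injective hσ hR (congrArg Prod.snd h)
  refine nodup_add.2 ⟨nodup_add.2 ⟨hplain, hadd, ?_⟩, hsub, ?_⟩
  · simp only [disjoint_left, mem_sum, mem_map, not_exists, not_and, forall_exists_index, and_imp]
    rintro _ i - b - rfl j - h
    exact pi_single_one_ne_single_add_single hσ i j (congrArg Prod.snd h).symm
  · simp only [disjoint_left, mem_add, mem_sum, mem_map, not_exists, not_and]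
    rintro _ (⟨i, -, b, -, rfl⟩ | ⟨i, -, rfl⟩) j - h
    · exact pi_single_one_ne_single_sub_single hσ hR i j (congrArg Prod.snd h).symm
    · exact pi_single_add_single_ne_single_sub_single hσ hR i j (congrArg Prod.snd h).symm

theorem snd_ne_zero_of_mem_crossTerms (hn : ∀ i, 2 ≤ n i) (hσ : ∀ i, i ≠ σ i)
    {w : G × ∀ i, ZMod (n i)} (hw : w ∈ crossTerms n σ x y A U V) : w.2 ≠ 0 := by
  have (i : ι) : Fact (1 < n i) := ⟨hn i⟩
  have apply_self_ne_zero {i : ι} {v : ∀ i, ZMod (n i)} (hv : v i = 1) : v ≠ 0 := fun h0 =>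
    one_ne_zero (hv.symm.trans (congrFun h0 i))
  simp only [crossTerms, mem_add, mem_sum, mem_map, Finset.mem_val] at hw
  obtain (⟨i, -, b, -, rfl⟩ | ⟨i, -, rfl⟩) | ⟨i, -, rfl⟩ := hw <;>
    exact apply_self_ne_zero (i := i) (by simp [hσ])

variable [AddCommMonoid G]

theorem sum_cycleSequence :
    (cycleSequence n σ x y R A U V).sum =
      (R.sum, 0) + (∑ i, ((A i).sum, card (A i) • Pi.single i 1) +
        ∑ i ∈ U, (x i, Pi.single i 1 + Pi.single (σ i) 1) +
        ∑ i ∈ V, (y i, Pi.single i 1 - Pi.single (σ i) 1)) := by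
  simp only [cycleSequence, crossTerms, sum_add, sum_map_prodMk, smul_zero, Finset.sum_map_val,
    Multiset.sum_sum]

theorem fst_sum_cycleSequence :
    (cycleSequence n σ x y R A U V).sum.1 =
      R.sum + (∑ i, (A i).sum + ∑ i ∈ U, x i + ∑ i ∈ V, y i) := by
  simp only [sum_cycleSequence, Prod.fst_add, Prod.fst_sum]

theorem snd_sum_cycleSequence_apply (j : ι) :
    (cycleSequence n σ x y R A U V).sum.2 (σ j) =
      card (A (σ j)) + (if σ j ∈ U then 1 else 0) + (if σ j ∈ V then 1 else 0) +
        (if j ∈ U then 1 else 0) - (if j ∈ V then 1 else 0) := by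
  simp only [sum_cycleSequence, Prod.snd_add, Prod.snd_sum, Pi.add_apply, Finset.sum_apply,
    Pi.sub_apply, Pi.zero_apply, Pi.smul_apply, pi_single_one_apply, σ.injective.eq_iff,
    Finset.sum_add_distrib, Finset.sum_sub_distrib, smul_ite, smul_zero, Finset.sum_ite_eq,
    Finset.mem_univ, if_true, zero_add, nsmul_one]
  ring

-- The left-hand side lies between `-1` and `n + 1`, so its vanishing modulo `n` leaves `0` and `n`.
theorem eq_ite_of_natCast_add_ite_eq_zero {n m a : ℕ} (hm : m + 2 = n) (ha : a ≤ m)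
    {u v u' v' : Prop} [Decidable u] [Decidable v] [Decidable u'] [Decidable v']
    (h : (a : ZMod n) + (if u then 1 else 0) + (if v then 1 else 0) + (if u' then 1 else 0) -
      (if v' then 1 else 0) = 0) :
    (¬(u ↔ v) → ¬(u' ↔ v') ∧ a = if u' then m else 0) ∧
      ((u ↔ v) → (u' ↔ v') → a = if u then m else 0) := by
  have hdvd : (n : ℤ) ∣ a + (if u then 1 else 0) + (if v then 1 else 0) + (if u' then 1 else 0) -
      (if v' then 1 else 0) := by
    rw [← ZMod.intCast_zmod_eq_zero_iff_dvd]
    push_cast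
    exact h
  obtain ⟨q, hq⟩ := hdvd
  have hq0 : 0 ≤ q := by
    by_contra! hneg
    have : (n : ℤ) * q ≤ n * (-1) := by gcongr; omega
    split_ifs at hq <;> omega
  have hq1 : q ≤ 1 := by
    by_contra! hlarge
    have : (n : ℤ) * 2 ≤ n * q := by gcongr; omega
    split_ifs at hq <;> omega
  obtain rfl | rfl : q = 0 ∨ q = 1 := by omega
  all_goals
    by_cases hu : u <;> by_cases hv : v <;> by_cases hu' : u' <;> by_cases hv' : v' <;>
      simp only [hu, hv, hu', hv', if_true, if_false] at hq ⊢ <;> grind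

-- By `eq_ite_of_natCast_add_ite_eq_zero`, a difference between `U` and `V` at one index propagates
-- along the cycle `σ` to all indices.
theorem eq_or_eq_compl_of_snd_sum_cycleSequence_eq_zero (hσ : σ.IsCycleOn Set.univ)
    (hB : ∀ i, card (B i) + 2 = n i) (hA : ∀ i, A i ≤ B i)
    (h : (cycleSequence n σ x y R A U V).sum.2 = 0) :
    (V = U ∧ ∀ i, A i = if i ∈ U then B i else 0) ∨
      (V = Uᶜ ∧ ∀ i, A (σ i) = if i ∈ U then B (σ i) else 0) := by
  have key (j : ι) := eq_ite_of_natCast_add_ite_eq_zero (hB (σ j)) (card_le_card (hA (σ j)))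
    ((snd_sum_cycleSequence_apply j).symm.trans (congrFun h (σ j)))
  have eq_ite_of_card {i : ι} {p : Prop} [Decidable p]
      (hcard : card (A i) = if p then card (B i) else 0) : A i = if p then B i else 0 := by
    split_ifs with hp
    · exact eq_of_le_of_card_le (hA i) (by rw [hcard, if_pos hp])
    · exact card_eq_zero.1 (by rw [hcard, if_neg hp])
  by_cases hUV : ∀ i, i ∈ U ↔ i ∈ V
  · refine .inl ⟨(Finset.ext hUV).symm, fun i => ?_⟩
    obtain ⟨j, rfl⟩ := σ.surjective i
    exact eq_ite_of_card ((key j).2 (hUV _) (hUV _))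
  · obtain ⟨j, hj⟩ := not_forall.1 hUV
    have hne : ∀ i, ¬(i ∈ U ↔ i ∈ V) :=
      forall_of_isCycleOn_univ hσ (fun i hi => ((key i).1 hi).1) hj
    refine .inr ⟨Finset.ext fun i => ?_, fun i => eq_ite_of_card ((key i).1 (hne _)).2⟩
    have := hne i
    rw [Finset.mem_compl]
    tauto

theorem fst_sum_cycleSequence_of_eq {g : ι → G} (hdiag : ∀ i, (B i).sum + x i + y i = g i)
    (hA : ∀ i, A i = if i ∈ U then B i else 0) :
    (cycleSequence n σ x y R A U U).sum.1 = R.sum + ∑ i ∈ U, g i := by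
  simp only [fst_sum_cycleSequence, hA, apply_ite sum, sum_zero, Finset.sum_ite_mem,
    Finset.univ_inter, ← Finset.sum_add_distrib, hdiag]

-- `U` contributes `g j` for all `j ≠ o` at once and `Uᶜ` contributes `g o`; only one of the two
-- contains `o`.
theorem fst_sum_cycleSequence_of_compl {g : ι → G} {o : ι}
    (hshift : ∀ i, (B (σ i)).sum + x i = (Pi.single o (∑ j ∈ {o}ᶜ, g j) : ι → G) i)
    (hA : ∀ i, A (σ i) = if i ∈ U then B (σ i) else 0) :
    (cycleSequence n σ x (Pi.single o (g o)) R A U Uᶜ).sum.1 =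
      R.sum + ∑ j ∈ if o ∈ U then {o}ᶜ else {o}, g j := by
  rw [fst_sum_cycleSequence, ← Equiv.sum_comp σ]
  simp only [hA, apply_ite sum, sum_zero, Finset.sum_ite_mem, Finset.univ_inter,
    ← Finset.sum_add_distrib, hshift]
  split_ifs with ho <;> simp [ho]

theorem sum_cycleSequence_univ {g : ι → G} (hB : ∀ i, card (B i) + 2 = n i)
    (hdiag : ∀ i, (B i).sum + x i + y i = g i) (hg : S₀.sum + ∑ i, g i = 0) :
    (cycleSequence n σ x y S₀ B Finset.univ Finset.univ).sum = 0 := by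
  refine Prod.ext ?_ (funext fun i => ?_)
  · rw [fst_sum_cycleSequence_of_eq hdiag (by simp), hg, Prod.fst_zero]
  · obtain ⟨j, rfl⟩ := σ.surjective i
    have hcast : ((card (B (σ j)) + 2 : ℕ) : ZMod (n (σ j))) = 0 := by
      rw [hB, ZMod.natCast_self]
    simp only [snd_sum_cycleSequence_apply, Finset.mem_univ, if_true, Prod.snd_zero,
      Pi.zero_apply]
    push_cast at hcast
    linear_combination hcast

theorem isMinimalZeroSum_cycleSequence [Nontrivial ι] (hσ : σ.IsCycleOn Set.univ) {g : ι → G}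
    (hS : IsMinimalZeroSum (S₀ + Finset.univ.val.map g)) (hB : ∀ i, card (B i) + 2 = n i) {o : ι}
    (hdiag : ∀ i, (B i).sum + x i + (Pi.single o (g o) : ι → G) i = g i)
    (hshift : ∀ i, (B (σ i)).sum + x i = (Pi.single o (∑ j ∈ {o}ᶜ, g j) : ι → G) i) :
    IsMinimalZeroSum
      (cycleSequence n σ x (Pi.single o (g o)) S₀ B Finset.univ Finset.univ) := by
  refine isMinimalZeroSum_iff.2 ⟨?_, ?_, fun T hT hTsum => ?_⟩
  · rw [← card_pos, card_cycleSequence]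
    have := Finset.card_pos.2 (Finset.univ_nonempty (α := ι))
    omega
  · exact sum_cycleSequence_univ hB hdiag (by simpa using hS.2.1)
  obtain ⟨R, hR, A, hA, U, V, rfl⟩ := exists_eq_cycleSequence_of_le hT
  obtain ⟨rfl, hAU⟩ | ⟨rfl, hAU⟩ :=
    eq_or_eq_compl_of_snd_sum_cycleSequence_eq_zero hσ hB hA (congrArg Prod.snd hTsum)
  · have hsum := (fst_sum_cycleSequence_of_eq hdiag hAU).symm.trans (congrArg Prod.fst hTsum)
    obtain ⟨rfl, rfl⟩ | ⟨rfl, rfl⟩ := hS.eq_empty_or_eq_univ_of_sum_add_eq_zero hR hsum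
    · exact .inl (by simp [cycleSequence, crossTerms, hAU])
    · obtain rfl : A = B := funext fun i => by rw [hAU, if_pos (Finset.mem_univ i)]
      exact .inr rfl
  · have hsum := (fst_sum_cycleSequence_of_compl hshift hAU).symm.trans (congrArg Prod.fst hTsum)
    obtain ⟨-, hU⟩ | ⟨-, hU⟩ := hS.eq_empty_or_eq_univ_of_sum_add_eq_zero hR hsum <;>
      split_ifs at hU <;> simp at hU

end CycleSequence

theorem cmul_one_cycleSequence {G ι : Type*} [AddCommMonoid G] [Fintype ι] [DecidableEq ι]
    {n : ι → ℕ} (hn : ∀ i, 3 ≤ n i) {σ : Equiv.Perm ι} (hσ : ∀ i, i ≠ σ i)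
    (hσσ : ∀ i, σ (σ i) ≠ i) {B : ι → Multiset G} (hB : ∀ i, (B i).Nodup) (x y : ι → G)
    (S₀ : Multiset G) (U V : Finset ι) :
    cmul 1 (cycleSequence n σ x y S₀ B U V) = cmul 1 S₀ := by
  rw [cycleSequence, cmul_one_add_of_nodup_of_disjoint (nodup_crossTerms hn hσ hσσ hB U V),
    cmul_one_map_of_injective (Prod.mk_left_injective 0)]
  refine disjoint_left.2 fun {w} hw hw' => ?_
  obtain ⟨b, -, rfl⟩ := mem_map.1 hw
  exact snd_ne_zero_of_mem_crossTerms (fun i => Nat.le_of_succ_le (hn i)) hσ hw' rfl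

-- With `β i` the sum of `B i`, eliminating `x i` leaves a prescribed value of
-- `β (finRotate r i) - β i`, and these values add up to zero.
theorem exists_finset_sum_eq_finRotate {G : Type*} [AddCommGroup G] [Fintype G] {h : G}
    (hh : 2 • h ≠ 0) {r : ℕ} {n : Fin r → ℕ} (hn : ∀ i, 3 ≤ n i)
    (hnG : ∀ i, n i ≤ Fintype.card G + 1) (g : Fin r → G) (o : Fin r) :
    ∃ (B : Fin r → Finset G) (x : Fin r → G), (∀ i, (B i).card + 2 = n i) ∧
      (∀ i, (B i).val.sum + x i + (Pi.single o (g o) : Fin r → G) i = g i) ∧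
      ∀ i, (B (finRotate r i)).val.sum + x i =
        (Pi.single o (∑ j ∈ {o}ᶜ, g j) : Fin r → G) i := by
  set c : Fin r → G := Pi.single o (g o)
  set d : Fin r → G := Pi.single o (∑ j ∈ {o}ᶜ, g j)
  have hsum : ∑ i, (d i - (g i - c i)) = 0 := by
    simp [c, d, Finset.sum_sub_distrib, ← Finset.sum_compl_add_sum {o} g]
  obtain ⟨β, hβ⟩ := exists_sub_finRotate_eq hsum
  choose B hBcard hBsum using fun i =>
    exists_finset_card_eq_sum_eq hh (m := n i - 2) (by have := hn i; omega)
      (by have := hn i; have := hnG i; omega) (β i)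
  have sum_val_eq (i : Fin r) : (B i).val.sum = β i := (Finset.sum_val _).trans (hBsum i)
  refine ⟨B, fun i => d i - β (finRotate r i), fun i => ?_, fun i => ?_, fun i => ?_⟩
  · have := hn i
    rw [hBcard]
    omega
  · simp only [sum_val_eq, sub_eq_iff_eq_add.1 (hβ i)]
    abel
  · rw [sum_val_eq, add_sub_cancel]

theorem exists_two_nsmul_ne_zero {G : Type*} [AddMonoid G] (hexp : 3 ≤ AddMonoid.exponent G) :
    ∃ h : G, 2 • h ≠ 0 := by
  by_contra! hG
  have := AddMonoid.exponent_min' 2 two_pos hG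
  omega

theorem IsMinimalZeroSum.exists_prod_pi_cmul_one_le {G : Type*} [AddCommGroup G] [Fintype G]
    {h : G} (hh : 2 • h ≠ 0) {r : ℕ} (hr : 3 ≤ r) {n : Fin r → ℕ} (hn : ∀ i, 3 ≤ n i)
    (hnG : ∀ i, n i ≤ Fintype.card G + 1) {S : Multiset G} (hS : IsMinimalZeroSum S)
    (hrS : r ≤ card S) :
    ∃ T : Multiset (G × ∀ i, ZMod (n i)), IsMinimalZeroSum T ∧ cmul 1 T ≤ cmul 1 S - r ∧
      card T = card S + ∑ i, (n i - 1) := by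
  have : Nontrivial (Fin r) := Fin.nontrivial_iff_two_le.2 (by omega)
  have hσ := isCycleOn_finRotate_univ (r := r) (by omega)
  have hσ₁ (i : Fin r) : i ≠ finRotate r i :=
    (hσ.apply_ne Set.nontrivial_univ (Set.mem_univ i)).symm
  have hσ₂ := apply_apply_ne_of_isCycleOn_univ hσ (by simpa)
  obtain ⟨S₀, g, rfl, hcm⟩ := exists_add_map_cmul_one_le hrS
  let o : Fin r := ⟨0, by omega⟩
  obtain ⟨B, x, hB, hdiag, hshift⟩ := exists_finset_sum_eq_finRotate hh hn hnG g o
  refine ⟨cycleSequence n (finRotate r) x (Pi.single o (g o)) S₀ (fun i => (B i).val) .univ .univ,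
    isMinimalZeroSum_cycleSequence hσ hS hB hdiag hshift, ?_, ?_⟩
  · rwa [cmul_one_cycleSequence hn hσ₁ hσ₂ fun i => (B i).nodup]
  · have hsum : ∑ i, (n i - 1) = ∑ i, (B i).card + r := by simp [← hB, Finset.sum_add_distrib]
    rw [hsum, card_cycleSequence]
    simp only [card_add, card_map, Finset.card_val, Finset.card_univ, Fintype.card_fin]
    ring

theorem SDk_add_three_cyclic_general {G : Type*} [AddCommGroup G] [Fintype G]
    (hexp : 3 ≤ AddMonoid.exponent G) {k r : ℕ} (hr : 3 ≤ r) (hrSD : r ≤ SDk G (k + r))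
    {n : Fin r → ℕ} (hn : ∀ i, 3 ≤ n i) (hnG : ∀ i, n i ≤ Fintype.card G + 1) :
    SDk G (k + r) + ∑ i, (n i - 1) ≤ SDk (G × ∀ i, ZMod (n i)) k := by
  have (i : Fin r) : NeZero (n i) := ⟨by have := hn i; omega⟩
  obtain ⟨h, hh⟩ := exists_two_nsmul_ne_zero hexp
  obtain ⟨S, hS, hcmS, hcardS⟩ := exists_isMinimalZeroSum_card_eq_SDk G (k + r)
  obtain ⟨T, hT, hcmT, hcardT⟩ :=
    hS.exists_prod_pi_cmul_one_le hh hr hn hnG (hrSD.trans_eq hcardS.symm)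
  rw [← hcardS, ← hcardT]
  exact hT.card_le_SDk (by omega)

theorem SDk_prod_pi_fin_three_le (G : Type*) [AddCommMonoid G] [Finite G] (n : Fin 3 → ℕ)
    [∀ i, NeZero (n i)] (k : ℕ) :
    SDk (G × ∀ i, ZMod (n i)) k ≤ SDk (G × ZMod (n 0) × ZMod (n 1) × ZMod (n 2)) k := by
  let coords : (∀ i, ZMod (n i)) →+ ZMod (n 0) × ZMod (n 1) × ZMod (n 2) :=
    (Pi.evalAddMonoidHom _ 0).prod ((Pi.evalAddMonoidHom _ 1).prod (Pi.evalAddMonoidHom _ 2))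
  have hcoords : Function.Injective coords := fun v w hvw => by
    simpa [coords, funext_iff, Fin.forall_fin_succ] using hvw
  exact SDk_le_SDk_of_injective (f := (AddMonoidHom.id G).prodMap coords)
    (Function.injective_id.prodMap hcoords) k

/-- Proposition: for a finite abelian group `G` with `exp(G) ≥ 3`, `k ∈ ℕ₀` and
integers `3 ≤ n_i ≤ |G| + 1` for `i = 1, 2, 3`:
`SD_k(G ⊕ C_{n_1} ⊕ C_{n_2} ⊕ C_{n_3}) ≥ SD_{k+3}(G) + (n_1−1) + (n_2−1) + (n_3−1)`. -/
theorem SDk_add_three_cyclic (G : Type*) [AddCommGroup G] [Fintype G]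
    (hexp : 3 ≤ AddMonoid.exponent G) (k : ℕ) (n₁ n₂ n₃ : ℕ)
    (h₁ : 3 ≤ n₁) (h₁' : n₁ ≤ Fintype.card G + 1)
    (h₂ : 3 ≤ n₂) (h₂' : n₂ ≤ Fintype.card G + 1)
    (h₃ : 3 ≤ n₃) (h₃' : n₃ ≤ Fintype.card G + 1) :
    SDk G (k + 3) + (n₁ - 1) + (n₂ - 1) + (n₃ - 1) ≤
      SDk (G × ZMod n₁ × ZMod n₂ × ZMod n₃) k := by
  have hn : ∀ i, 3 ≤ ![n₁, n₂, n₃] i := by simp [Fin.forall_fin_succ, h₁, h₂, h₃]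
  have hnG : ∀ i, ![n₁, n₂, n₃] i ≤ Fintype.card G + 1 := by
    simp [Fin.forall_fin_succ, h₁', h₂', h₃']
  have (i : Fin 3) : NeZero (![n₁, n₂, n₃] i) := ⟨by have := hn i; omega⟩
  have hSD : 3 ≤ SDk G (k + 3) := le_SDk_of_le_exponent hexp (by omega)
  have hgen := SDk_add_three_cyclic_general hexp le_rfl hSD hn hnG
  simp only [Fin.sum_univ_three, ← add_assoc] at hgen
  exact hgen.trans (SDk_prod_pi_fin_three_le G ![n₁, n₂, n₃] k)
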